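/- Let m, p, n, s, t, k be natural numbers with n ≤ p, s ≤ t and k > max(p, t), let a, b ∈ ℂ, and let φ(z) = a·z^p·conj(z)^n + b·z^s·conj(z)^t. Then for every z ∈ ℂ, (T_φ (w ↦ w^k))(z) = a·((p+k+m)!/(p+k+m−n)!)·z^{p+k−n} + b·((s+k+m)!/(s+k+m−t)!)·z^{s+k−t}. -/

import Mathlib

open MeasureTheory Complex ComplexOrder

/-- Weight function: `|z|^{2m} e^{-|z|^2}` as a complex number. -/
noncomputable def fsWt (m : ℕ) (z : ℂ) : ℂ :=
  ((‖z‖ : ℝ) : ℂ) ^ (2 * m) * ((Real.exp (-‖z‖ ^ 2) : ℝ) : ℂ)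

/-- Fock–Sobolev reproducing kernel `K_m(z,w)`. -/
noncomputable def fsKernel (m : ℕ) (z w : ℂ) : ℂ :=
  ∑' j : ℕ, ((m.factorial : ℂ) / ((j + m).factorial : ℂ)) * (z * starRingEnd ℂ w) ^ j

/-- Toeplitz operator with symbol `ψ` acting on `f`, evaluated at `z`. -/
noncomputable def fsToeplitz (m : ℕ) (ψ f : ℂ → ℂ) (z : ℂ) : ℂ :=
  (1 / ((Real.pi : ℂ) * (m.factorial : ℂ))) *
    ∫ w : ℂ, ψ w * f w * fsKernel m z w * fsWt m w

/-- Fock–Sobolev pairing `⟨g, h⟩`. -/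
noncomputable def fsPair (m : ℕ) (g h : ℂ → ℂ) : ℂ :=
  ∫ z : ℂ, g z * starRingEnd ℂ (h z) * fsWt m z

/-- `‖g‖² = ⟨g, g⟩`. -/
noncomputable def fsNormSq (m : ℕ) (g : ℂ → ℂ) : ℂ := fsPair m g g

/-!
The kernel is a power series in `z * conj w` dominated termwise by the exponential series, so a
Toeplitz operator can be integrated term by term as soon as `exp (|z| |w|)` times the weighted
integrand is integrable; its Taylor coefficients at `0` are then normalized weighted moments in
powers of `conj w`.
For the monomial `w ^ A * conj w ^ B` rotation invariance of the area measure kills every moment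
but the one against `conj w ^ (A - B)`, and the surviving radial integral is a value of the Gamma
function.
-/

open scoped ComplexConjugate

theorem integral_eq_zero_of_comp_eq_smul {α E 𝕜 : Type*} [MeasurableSpace α] {μ : Measure α}
    [NormedAddCommGroup E] [NormedSpace ℝ E] [NormedField 𝕜] [NormedSpace 𝕜 E]
    [SMulCommClass ℝ 𝕜 E] {T : α ≃ᵐ α} (hT : MeasurePreserving T μ μ) {c : 𝕜} (hc : c ≠ 1)
    {f : α → E} (hf : ∀ x, f (T x) = c • f x) : ∫ x, f x ∂μ = 0 := by
  have hint : c • ∫ x, f x ∂μ = ∫ x, f x ∂μ := by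
    rw [← integral_smul, ← hT.integral_comp' f]
    simp_rw [hf]
  have hzero : (c - 1) • ∫ x, f x ∂μ = 0 := by rw [sub_smul, one_smul, hint, sub_self]
  exact (smul_eq_zero.mp hzero).resolve_left (sub_ne_zero.mpr hc)

theorem exists_circle_pow_mul_conj_pow_eq_neg_one {A B : ℕ} (h : A ≠ B) :
    ∃ u : Circle, (u : ℂ) ^ A * conj (u : ℂ) ^ B = -1 := by
  have hAB : (A : ℂ) - B ≠ 0 := sub_ne_zero.mpr (mod_cast h)
  refine ⟨Circle.exp (Real.pi / ((A : ℝ) - B)), ?_⟩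
  rw [Circle.coe_exp, ← exp_conj, ← exp_nat_mul, ← exp_nat_mul, ← exp_add, ← exp_pi_mul_I,
    map_mul, conj_ofReal, conj_I]
  congr 1
  push_cast
  field_simp
  ring

theorem integral_pow_mul_conj_pow_mul_radial_of_ne {A B : ℕ} (h : A ≠ B) (g : ℝ → ℂ) :
    ∫ w : ℂ, w ^ A * conj w ^ B * g ‖w‖ = 0 := by
  obtain ⟨u, hu⟩ := exists_circle_pow_mul_conj_pow_eq_neg_one h
  refine integral_eq_zero_of_comp_eq_smul (T := (rotation u).toMeasurableEquiv) (c := (-1 : ℂ))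
    (rotation u).measurePreserving (by norm_num) fun w => ?_
  rw [LinearIsometryEquiv.coe_toMeasurableEquiv, LinearIsometryEquiv.norm_map, rotation_apply,
    map_mul, mul_pow, mul_pow, smul_eq_mul]
  linear_combination (w ^ A * conj w ^ B * g ‖w‖) * hu

theorem integral_norm_pow_mul_exp_neg_norm_sq (n : ℕ) :
    ∫ w : ℂ, ‖w‖ ^ (2 * n) * Real.exp (-‖w‖ ^ 2) = Real.pi * n.factorial := by
  have hGamma := Complex.integral_rpow_mul_exp_neg_rpow (p := 2) (q := (2 * n : ℕ)) one_le_two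
    (by linarith [Nat.cast_nonneg (α := ℝ) (2 * n)])
  have harg : (((2 * n : ℕ) : ℝ) + 2) / 2 = n + 1 := by push_cast; ring
  rw [harg, Real.Gamma_nat_eq_factorial, mul_div_cancel_left₀ _ two_ne_zero] at hGamma
  simpa only [Real.rpow_natCast, Real.rpow_two] using hGamma

theorem integrable_norm_pow_mul_exp_sub {E : Type*} [NormedAddCommGroup E] [NormedSpace ℝ E]
    [FiniteDimensional ℝ E] [Nontrivial E] [MeasurableSpace E] [BorelSpace E] (μ : Measure E)
    [μ.IsAddHaarMeasure] (N : ℕ) (c : ℝ) {b : ℝ} (hb : 0 < b) :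
    Integrable (fun x : E => ‖x‖ ^ N * Real.exp (c * ‖x‖ - b * ‖x‖ ^ 2)) μ := by
  set d := Module.finrank ℝ E - 1
  have hgauss : IntegrableOn
      (fun r : ℝ => Real.exp (c ^ 2 / (2 * b)) * (r ^ (d + N) * Real.exp (-(b / 2) * r ^ 2)))
      (Set.Ioi 0) := by
    have h := (integrable_rpow_mul_exp_neg_mul_sq (half_pos hb)
      (s := (d + N : ℕ)) (by linarith [Nat.cast_nonneg (α := ℝ) (d + N)])).integrableOn
        (s := Set.Ioi 0)
    simp only [Real.rpow_natCast] at h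
    exact h.const_mul _
  refine (integrable_fun_norm_addHaar μ
    (f := fun r => r ^ N * Real.exp (c * r - b * r ^ 2))).mpr (hgauss.mono' ?_ ?_)
  · exact Continuous.aestronglyMeasurable (by fun_prop)
  filter_upwards [ae_restrict_mem measurableSet_Ioi] with r (hr : 0 < r)
  have hexp : c * r - b * r ^ 2 ≤ c ^ 2 / (2 * b) + -(b / 2) * r ^ 2 := by
    -- AM-GM for `c * r`, giving up half of the Gaussian decay
    have hsq : c ^ 2 / (2 * b) + -(b / 2) * r ^ 2 - (c * r - b * r ^ 2)
        = (c - b * r) ^ 2 / (2 * b) := by field_simp; ring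
    have : 0 ≤ (c - b * r) ^ 2 / (2 * b) := by positivity
    linarith
  calc ‖r ^ d • (r ^ N * Real.exp (c * r - b * r ^ 2))‖
      = r ^ (d + N) * Real.exp (c * r - b * r ^ 2) := by
        rw [smul_eq_mul, ← mul_assoc, ← pow_add, Real.norm_of_nonneg (by positivity)]
    _ ≤ r ^ (d + N) * Real.exp (c ^ 2 / (2 * b) + -(b / 2) * r ^ 2) := by gcongr
    _ = Real.exp (c ^ 2 / (2 * b)) * (r ^ (d + N) * Real.exp (-(b / 2) * r ^ 2)) := by
        rw [Real.exp_add]; ring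

theorem continuous_fsWt (m : ℕ) : Continuous (fsWt m) := by
  unfold fsWt
  fun_prop

theorem norm_fsWt (m : ℕ) (w : ℂ) : ‖fsWt m w‖ = ‖w‖ ^ (2 * m) * Real.exp (-‖w‖ ^ 2) := by
  rw [fsWt, norm_mul, norm_pow, norm_real, norm_real, norm_norm,
    Real.norm_of_nonneg (by positivity)]

theorem integral_pow_mul_conj_pow_mul_fsWt_of_ne (m : ℕ) {A B : ℕ} (h : A ≠ B) :
    ∫ w : ℂ, w ^ A * conj w ^ B * fsWt m w = 0 :=
  integral_pow_mul_conj_pow_mul_radial_of_ne h fun r => (r : ℂ) ^ (2 * m) * (Real.exp (-r ^ 2) : ℝ)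

theorem integral_pow_mul_conj_pow_mul_fsWt_self (m A : ℕ) :
    ∫ w : ℂ, w ^ A * conj w ^ A * fsWt m w = Real.pi * (A + m).factorial := by
  have hradial : ∀ w : ℂ, w ^ A * conj w ^ A * fsWt m w
      = ((‖w‖ ^ (2 * (A + m)) * Real.exp (-‖w‖ ^ 2) : ℝ) : ℂ) := fun w => by
    rw [← mul_pow, mul_conj', fsWt]
    push_cast
    ring
  simp_rw [hradial]
  rw [integral_complex_ofReal, integral_norm_pow_mul_exp_neg_norm_sq]
  push_cast
  rfl

section Kernel

theorem norm_fsKernel_term_le (m j : ℕ) (z w : ℂ) :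
    ‖(m.factorial : ℂ) / ((j + m).factorial : ℂ) * (z * conj w) ^ j‖
      ≤ (‖z‖ * ‖w‖) ^ j / j.factorial := by
  have hfact : (m.factorial : ℝ) / (j + m).factorial ≤ 1 / j.factorial := by
    rw [div_le_div_iff₀ (by positivity) (by positivity), one_mul, mul_comm]
    exact_mod_cast Nat.le_of_dvd (Nat.factorial_pos _)
      (Nat.factorial_mul_factorial_dvd_factorial_add j m)
  calc ‖(m.factorial : ℂ) / ((j + m).factorial : ℂ) * (z * conj w) ^ j‖
      = m.factorial / (j + m).factorial * (‖z‖ * ‖w‖) ^ j := by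
        rw [norm_mul, norm_div, norm_natCast, norm_natCast, norm_pow, norm_mul, norm_conj]
    _ ≤ 1 / j.factorial * (‖z‖ * ‖w‖) ^ j := by gcongr
    _ = (‖z‖ * ‖w‖) ^ j / j.factorial := by ring

theorem hasSum_pow_div_factorial_exp (x : ℝ) :
    HasSum (fun j : ℕ => x ^ j / j.factorial) (Real.exp x) := by
  rw [Real.exp_eq_exp_ℝ]
  exact NormedSpace.expSeries_div_hasSum_exp x

theorem hasSum_fsKernel (m : ℕ) (z w : ℂ) :
    HasSum (fun j : ℕ => (m.factorial : ℂ) / ((j + m).factorial : ℂ) * (z * conj w) ^ j)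
      (fsKernel m z w) :=
  (Summable.of_norm_bounded (Real.summable_pow_div_factorial _)
    fun j => norm_fsKernel_term_le m j z w).hasSum

theorem norm_fsKernel_le (m : ℕ) (z w : ℂ) : ‖fsKernel m z w‖ ≤ Real.exp (‖z‖ * ‖w‖) :=
  (hasSum_fsKernel m z w).norm_le_of_bounded (hasSum_pow_div_factorial_exp _)
    fun j => norm_fsKernel_term_le m j z w

theorem measurable_fsKernel (m : ℕ) (z : ℂ) : Measurable (fsKernel m z) :=
  Measurable.tsum fun j => Continuous.measurable (by fun_prop)

variable {μ : Measure ℂ} {F : ℂ → ℂ} {z : ℂ}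

theorem integrable_mul_fsKernel (m : ℕ) (hF : AEStronglyMeasurable F μ)
    (hexp : Integrable (fun w => ‖F w‖ * Real.exp (‖z‖ * ‖w‖)) μ) :
    Integrable (fun w => F w * fsKernel m z w) μ := by
  refine hexp.mono' (hF.mul (measurable_fsKernel m z).aestronglyMeasurable) (.of_forall fun w => ?_)
  rw [norm_mul]
  gcongr
  exact norm_fsKernel_le m z w

theorem hasSum_integral_mul_fsKernel (m : ℕ) (hF : AEStronglyMeasurable F μ)
    (hexp : Integrable (fun w => ‖F w‖ * Real.exp (‖z‖ * ‖w‖)) μ) :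
    HasSum (fun j : ℕ => (m.factorial : ℂ) / ((j + m).factorial : ℂ) * z ^ j *
      ∫ w, F w * conj w ^ j ∂μ) (∫ w, F w * fsKernel m z w ∂μ) := by
  have hmajorant (w : ℂ) : HasSum (fun j : ℕ => ‖F w‖ * ((‖z‖ * ‖w‖) ^ j / j.factorial))
      (‖F w‖ * Real.exp (‖z‖ * ‖w‖)) := (hasSum_pow_div_factorial_exp _).mul_left _
  have hsum := hasSum_integral_of_dominated_convergence (μ := μ)
    (F := fun (j : ℕ) w => F w * ((m.factorial : ℂ) / ((j + m).factorial : ℂ) * (z * conj w) ^ j))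
    (fun (j : ℕ) w => ‖F w‖ * ((‖z‖ * ‖w‖) ^ j / j.factorial))
    (fun j => hF.mul (Continuous.aestronglyMeasurable (by fun_prop)))
    (fun j => .of_forall fun w => by
      rw [norm_mul]
      gcongr
      exact norm_fsKernel_term_le m j z w)
    (.of_forall fun w => (hmajorant w).summable)
    (by simpa only [(hmajorant _).tsum_eq] using hexp)
    (.of_forall fun w => (hasSum_fsKernel m z w).mul_left _)
  have hmoment (j : ℕ) :
      ∫ w, F w * ((m.factorial : ℂ) / ((j + m).factorial : ℂ) * (z * conj w) ^ j) ∂μ =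
        (m.factorial : ℂ) / ((j + m).factorial : ℂ) * z ^ j * ∫ w, F w * conj w ^ j ∂μ := by
    rw [← integral_const_mul]
    congr 1 with w
    ring
  simpa only [hmoment] using hsum

end Kernel

section Toeplitz

variable {m : ℕ} {ψ ψ₁ ψ₂ f : ℂ → ℂ} {z : ℂ}

theorem fsToeplitz_add
    (h₁ : Integrable fun w => ψ₁ w * f w * fsKernel m z w * fsWt m w)
    (h₂ : Integrable fun w => ψ₂ w * f w * fsKernel m z w * fsWt m w) :
    fsToeplitz m (fun w => ψ₁ w + ψ₂ w) f z = fsToeplitz m ψ₁ f z + fsToeplitz m ψ₂ f z := by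
  simp only [fsToeplitz, add_mul, integral_add h₁ h₂, mul_add]

theorem hasSum_fsToeplitz (hmeas : AEStronglyMeasurable fun w => ψ w * f w * fsWt m w)
    (hexp : Integrable fun w => ‖ψ w * f w * fsWt m w‖ * Real.exp (‖z‖ * ‖w‖)) :
    HasSum (fun j : ℕ => z ^ j / (Real.pi * (j + m).factorial) *
      ∫ w, ψ w * f w * fsWt m w * conj w ^ j) (fsToeplitz m ψ f z) := by
  have hm : (m.factorial : ℂ) ≠ 0 := mod_cast m.factorial_ne_zero
  have hcoeff (j : ℕ) (c : ℂ) : z ^ j / (Real.pi * (j + m).factorial) * c =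
      1 / (Real.pi * m.factorial) *
        ((m.factorial : ℂ) / ((j + m).factorial : ℂ) * z ^ j * c) := by
    field_simp
  simp only [fsToeplitz, hcoeff, mul_right_comm _ (fsKernel m z _)]
  exact (hasSum_integral_mul_fsKernel m hmeas hexp).mul_left _

end Toeplitz

section Monomial

variable (m : ℕ) (a : ℂ) (p n k : ℕ) (z : ℂ)

theorem aestronglyMeasurable_monomial_mul_fsWt :
    AEStronglyMeasurable fun w : ℂ => a * w ^ p * conj w ^ n * w ^ k * fsWt m w := by
  have := continuous_fsWt m
  exact Continuous.aestronglyMeasurable (by fun_prop)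

theorem integrable_norm_monomial_mul_fsWt_mul_exp :
    Integrable fun w : ℂ =>
      ‖a * w ^ p * conj w ^ n * w ^ k * fsWt m w‖ * Real.exp (‖z‖ * ‖w‖) := by
  convert (integrable_norm_pow_mul_exp_sub (volume : Measure ℂ) (p + n + k + 2 * m) ‖z‖
    one_pos).const_mul ‖a‖ using 2 with w
  rw [norm_mul, norm_fsWt, norm_mul, norm_mul, norm_mul, norm_pow, norm_pow, norm_pow, norm_conj,
    one_mul, sub_eq_add_neg, Real.exp_add]
  ring

theorem integrable_monomial_mul_fsKernel_mul_fsWt :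
    Integrable fun w : ℂ => a * w ^ p * conj w ^ n * w ^ k * fsKernel m z w * fsWt m w := by
  simpa only [mul_right_comm _ (fsWt m _)] using
    integrable_mul_fsKernel m (aestronglyMeasurable_monomial_mul_fsWt m a p n k)
      (integrable_norm_monomial_mul_fsWt_mul_exp m a p n k z)

variable {p n k}

theorem fsToeplitz_monomial (hn : n ≤ p + k) :
    fsToeplitz m (fun w => a * w ^ p * conj w ^ n) (fun w => w ^ k) z =
      a * (((p + k + m).factorial : ℂ) / ((p + k + m - n).factorial : ℂ)) * z ^ (p + k - n) := by
  have hmoment (j : ℕ) : ∫ w : ℂ, a * w ^ p * conj w ^ n * w ^ k * fsWt m w * conj w ^ j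
      = a * ∫ w : ℂ, w ^ (p + k) * conj w ^ (n + j) * fsWt m w := by
    rw [← integral_const_mul]
    congr 1 with w
    ring
  have hsum := hasSum_fsToeplitz (aestronglyMeasurable_monomial_mul_fsWt m a p n k)
    (integrable_norm_monomial_mul_fsWt_mul_exp m a p n k z)
  simp only [hmoment] at hsum
  have hvanish (j : ℕ) (hj : j ≠ p + k - n) :
      ∫ w : ℂ, w ^ (p + k) * conj w ^ (n + j) * fsWt m w = 0 :=
    integral_pow_mul_conj_pow_mul_fsWt_of_ne m (by omega)
  rw [hsum.unique (hasSum_single (p + k - n) fun j hj => by rw [hvanish j hj, mul_zero, mul_zero]),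
    Nat.add_sub_cancel' hn, integral_pow_mul_conj_pow_mul_fsWt_self,
    show p + k - n + m = p + k + m - n by omega]
  have hpi : (Real.pi : ℂ) ≠ 0 := mod_cast Real.pi_ne_zero
  field_simp

end Monomial

theorem stmt2_general (m p n s t k : ℕ) (hn : n ≤ p + k) (ht : t ≤ s + k) (a b : ℂ) (φ : ℂ → ℂ)
    (hφ : φ = fun z => a * z ^ p * conj z ^ n + b * z ^ s * conj z ^ t) (z : ℂ) :
    fsToeplitz m φ (fun w => w ^ k) z =
      a * (((p + k + m).factorial : ℂ) / ((p + k + m - n).factorial : ℂ)) * z ^ (p + k - n)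
      + b * (((s + k + m).factorial : ℂ) / ((s + k + m - t).factorial : ℂ)) * z ^ (s + k - t) := by
  rw [hφ, fsToeplitz_add (integrable_monomial_mul_fsKernel_mul_fsWt m a p n k z)
      (integrable_monomial_mul_fsKernel_mul_fsWt m b s t k z),
    fsToeplitz_monomial m a z hn, fsToeplitz_monomial m b z ht]

theorem stmt2 (m p n s t k : ℕ) (hn : n ≤ p) (hs : s ≤ t) (hk : k > max p t)
    (a b : ℂ) (φ : ℂ → ℂ) (hφ : φ = fun z => a * z ^ p * (starRingEnd ℂ z) ^ n + b * z ^ s * (starRingEnd ℂ z) ^ t) :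
    ∀ z : ℂ, fsToeplitz m φ (fun w => w ^ k) z =
      a * (((p + k + m).factorial : ℂ) / ((p + k + m - n).factorial : ℂ)) * z ^ (p + k - n)
      + b * (((s + k + m).factorial : ℂ) / ((s + k + m - t).factorial : ℂ)) * z ^ (s + k - t) :=
  stmt2_general m p n s t k (by omega) (by omega) a b φ hφ
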